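/- (Fractional version of the main technical lemma) For any graph F with maximum degree at least two, there exist constants ε ∈ (0,1/2] and δ = δ(F) ∈ (0,1/2] such that for all n ≥ 1 and 0 < p ≤ ε·n^{-1/m_2(F)}: for any collection H of graphs on vertex set [n] and any function λ : H → [0,∞) satisfying Σ_{H ∈ H} λ(H)·exp(-δ·e(H)·p) ≤ 1/2, there exists an F-free graph G on [n] with Σ_{H ∈ H(G)} λ(H) < 1, where H(G) is the set of H ∈ H sharing no edge with G. -/

import Mathlib

open scoped Classical
open Finset

/-!
The proof is by alteration of the binomial random graph. Choose `J ⊆ F` attaining `m₂(F)`; since `F`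
has a vertex of degree two, `m₂(F) ≥ 1`, hence `J` has `k ≥ 2` edges. From a random graph `A`, in
which every edge is present independently with probability `p`, remove all edges of a maximal family
of edge-disjoint copies of `J` in `A`. By maximality what remains is `J`-free, hence `F`-free.

The point is that the remaining graph misses a fixed edge set `h` with probability at most
`exp(-p|h|/2)` (`sum_weight_alter_le`). If it does, then some edge-disjoint family `S` of copies of
`J`, all meeting `h`, is contained in `A` and covers `A ∩ h`. For fixed `S` this has probability at
most `p^(k|S|) (1-p)^(|h|-k|S|)`, and summing over all sets `S` of copies meeting `h` gives at most
`(1-p)^|h| (1 + (p/(1-p))^k)^M`, where `M` is the number of copies meeting `h`. At most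
`v_J² n^(v_J-2)` copies contain a given edge (`card_copies_through_le`), and `p ≤ ε n^(-1/m₂(F))`
makes `n^(v_J-2) p^(k-1) ≤ ε`, so for small `ε` the second factor is at most `exp(p|h|/2)`.

Consequently the expected value of `Σ_{H ∈ H(G)} λ(H)` is at most `1/2`, and `δ = 1/2` works.
-/

/-- The 2-density `m₂(F) = max_{J ⊆ F, v_J ≥ 3} (e_J - 1)/(v_J - 2)` of a graph. -/
noncomputable def m2Dens {V : Type*} [Fintype V] (F : SimpleGraph V) : ℝ :=
  sSup {x : ℝ | ∃ J : F.Subgraph, 3 ≤ J.verts.ncard ∧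
    x = ((J.edgeSet.ncard : ℝ) - 1) / ((J.verts.ncard : ℝ) - 2)}

/-- `G` is `F`-free: there is no embedding of `F` into `G` mapping edges to edges. -/
def FFree {V W : Type*} (F : SimpleGraph V) (G : SimpleGraph W) : Prop :=
  ¬ ∃ f : V ↪ W, ∀ a b, F.Adj a b → G.Adj (f a) (f b)

/-! ### Random subsets and alteration -/

section Abstract

variable {α : Type*} [DecidableEq α]

/-- Probability that a random subset of `E`, containing each element independently with
probability `p`, equals `A`. -/
noncomputable def weight (E : Finset α) (p : ℝ) (A : Finset α) : ℝ :=
  p ^ A.card * (1 - p) ^ (E \ A).card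

lemma weight_nonneg (E : Finset α) {p : ℝ} (hp : 0 ≤ p) (hp1 : p ≤ 1) (A : Finset α) :
    0 ≤ weight E p A := by
  have : 0 ≤ 1 - p := by linarith
  unfold weight; positivity

lemma sum_weight (E : Finset α) (p : ℝ) : ∑ A ∈ E.powerset, weight E p A = 1 := by
  have h := Finset.prod_add (fun _ : α => p) (fun _ => 1 - p) E
  simp only [Finset.prod_const] at h
  simpa [weight] using h.symm

/-- Upper bound for the probability that a random subset of `E` contains `U` and avoids `T`. -/
lemma sum_weight_filter_le (E : Finset α) {p : ℝ} (hp : 0 ≤ p) (hp1 : p ≤ 1)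
    {U T : Finset α} (hU : U ⊆ E) (hT : T ⊆ E) (hUT : Disjoint U T) :
    ∑ A ∈ E.powerset with U ⊆ A ∧ Disjoint T A, weight E p A
      ≤ p ^ U.card * (1 - p) ^ T.card := by
  have hq : 0 ≤ 1 - p := by linarith
  have h := Finset.prod_add (fun e => if e ∈ T then 0 else p)
    (fun e => if e ∈ U then 0 else 1 - p) E
  have hl : ∏ e ∈ E, ((if e ∈ T then 0 else p) + (if e ∈ U then 0 else 1 - p))
      = p ^ U.card * (1 - p) ^ T.card := by
    have : ∀ e ∈ E, ((if e ∈ T then 0 else p) + (if e ∈ U then 0 else 1 - p))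
        = (if e ∈ U then p else 1) * (if e ∈ T then 1 - p else 1) := by
      intro e _
      have := fun h1 : e ∈ U => Finset.disjoint_left.1 hUT h1
      by_cases h1 : e ∈ U <;> by_cases h2 : e ∈ T <;> simp_all
    rw [Finset.prod_congr rfl this, Finset.prod_mul_distrib, Finset.prod_ite_mem,
      Finset.prod_ite_mem, Finset.inter_eq_right.2 hU, Finset.inter_eq_right.2 hT]
    simp
  rw [← hl, h, Finset.sum_filter]
  refine Finset.sum_le_sum fun A _ => ?_
  split_ifs with hA
  · unfold weight
    have h1 : ∀ e ∈ A, (if e ∈ T then 0 else p) = p := fun e he =>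
      if_neg fun h => Finset.disjoint_left.1 hA.2 h he
    have h2 : ∀ e ∈ E \ A, (if e ∈ U then 0 else 1 - p) = 1 - p := fun e he =>
      if_neg fun h => (Finset.mem_sdiff.1 he).2 (hA.1 h)
    rw [Finset.prod_congr rfl h1, Finset.prod_congr rfl h2]
    simp
  · refine mul_nonneg (Finset.prod_nonneg fun e _ => ?_) (Finset.prod_nonneg fun e _ => ?_) <;>
      split_ifs <;> simp [hp, hq]

lemma sum_le_sum_of_cover {ι β : Type*} {r : Finset β} {s : Finset ι} {t : ι → Finset β}
    (hr : ∀ b ∈ r, ∃ i ∈ s, b ∈ t i) {f : β → ℝ} (hf : ∀ b, 0 ≤ f b) :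
    ∑ b ∈ r, f b ≤ ∑ i ∈ s, ∑ b ∈ t i, f b := by
  calc ∑ b ∈ r, f b ≤ ∑ b ∈ r, ∑ i ∈ s, if b ∈ t i then f b else 0 := by
        refine Finset.sum_le_sum fun b hb => ?_
        obtain ⟨i, hi, hbi⟩ := hr b hb
        refine le_trans (by rw [if_pos hbi]) (Finset.single_le_sum
          (f := fun i => if b ∈ t i then f b else 0) (fun j _ => ?_) hi)
        split_ifs <;> simp [hf]
    _ = ∑ i ∈ s, ∑ b ∈ r, if b ∈ t i then f b else 0 := Finset.sum_comm
    _ ≤ ∑ i ∈ s, ∑ b ∈ t i, f b := by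
        refine Finset.sum_le_sum fun i _ => ?_
        rw [← Finset.sum_filter]
        exact Finset.sum_le_sum_of_subset_of_nonneg
          (fun b hb => (Finset.mem_filter.1 hb).2) fun b _ _ => hf b

lemma exists_maximal_packing (𝒞 : Finset (Finset α)) (A : Finset α) :
    ∃ S ⊆ 𝒞, (∀ C ∈ S, C ⊆ A) ∧ (S : Set (Finset α)).PairwiseDisjoint id ∧
      ∀ C ∈ 𝒞, C.Nonempty → ¬ C ⊆ A \ S.biUnion id := by
  obtain ⟨S, hS, hmax⟩ := Finset.exists_max_image
    (𝒞.powerset.filter fun S : Finset (Finset α) => (∀ C ∈ S, C ⊆ A) ∧ (S : Set (Finset α)).PairwiseDisjoint id)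
    Finset.card ⟨∅, by simp⟩
  simp only [Finset.mem_filter, Finset.mem_powerset] at hS hmax
  refine ⟨S, hS.1, hS.2.1, hS.2.2, fun C hC hne hCA => ?_⟩
  have hdis : ∀ D ∈ S, Disjoint C D := fun D hD => by
    rw [Finset.disjoint_left]
    intro e he heD
    exact (Finset.mem_sdiff.1 (hCA he)).2 (Finset.mem_biUnion.2 ⟨D, hD, heD⟩)
  have hCS : C ∉ S := fun h => hne.ne_empty (by simpa using hdis C h)
  have := hmax (insert C S) ⟨Finset.insert_subset hC hS.1, ?_, ?_⟩
  · rw [Finset.card_insert_of_notMem hCS] at this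
    omega
  · intro D hD
    rcases Finset.mem_insert.1 hD with rfl | hD
    · exact hCA.trans Finset.sdiff_subset
    · exact hS.2.1 D hD
  · rw [Finset.coe_insert]
    exact hS.2.2.insert fun D hD _ => hdis D hD

/-- A maximal family of pairwise disjoint members of `𝒞` contained in `A`. -/
noncomputable def packing (𝒞 : Finset (Finset α)) (A : Finset α) : Finset (Finset α) :=
  (exists_maximal_packing 𝒞 A).choose

/-- What is left of `A` after deleting all elements of the chosen maximal packing. -/
noncomputable def alter (𝒞 : Finset (Finset α)) (A : Finset α) : Finset α :=
  A \ (packing 𝒞 A).biUnion id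

lemma alter_subset (𝒞 : Finset (Finset α)) (A : Finset α) : alter 𝒞 A ⊆ A :=
  Finset.sdiff_subset

/-- The altered random set misses `h` with probability at most `exp(-p|h|/2)`, provided every
element of `h` lies in few members of the `k`-uniform family `𝒞`. -/
lemma sum_weight_alter_le (E : Finset α) (𝒞 : Finset (Finset α)) {k : ℕ}
    (h𝒞 : ∀ C ∈ 𝒞, C ⊆ E ∧ C.card = k) {h : Finset α} (hh : h ⊆ E) {p D : ℝ}
    (hp : 0 < p) (hp1 : p ≤ 1 / 2)
    (hD : ∀ e ∈ h, ((𝒞.filter fun C => e ∈ C).card : ℝ) ≤ D)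
    (hDp : D * (2 * p) ^ k ≤ p / 2) :
    ∑ A ∈ E.powerset with Disjoint (alter 𝒞 A) h, weight E p A
      ≤ Real.exp (-(1 / 2 * (h.card : ℝ) * p)) := by
  have hq : 0 < 1 - p := by linarith
  set 𝒞h := 𝒞.filter fun C => ¬ Disjoint C h with h𝒞h
  set c : ℝ := (p / (1 - p)) ^ k with hc
  have hc0 : 0 ≤ c := by positivity
  have hcp : c ≤ (2 * p) ^ k := by
    refine pow_le_pow_left₀ (by positivity) ?_ k
    rw [div_le_iff₀ hq]; nlinarith
  have hcard : (𝒞h.card : ℝ) ≤ h.card * D := by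
    have h1 : 𝒞h ⊆ h.biUnion fun e => 𝒞.filter fun C => e ∈ C := by
      intro C hC
      obtain ⟨hC, hd⟩ := Finset.mem_filter.1 hC
      obtain ⟨e, he, heh⟩ := Finset.not_disjoint_iff.1 hd
      exact Finset.mem_biUnion.2 ⟨e, heh, Finset.mem_filter.2 ⟨hC, he⟩⟩
    calc (𝒞h.card : ℝ) ≤ ∑ e ∈ h, ((𝒞.filter fun C => e ∈ C).card : ℝ) := by
          exact_mod_cast (Finset.card_le_card h1).trans Finset.card_biUnion_le
      _ ≤ ∑ e ∈ h, D := Finset.sum_le_sum hD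
      _ = h.card * D := by simp
  let 𝒮 := 𝒞h.powerset.filter fun S : Finset (Finset α) => (S : Set (Finset α)).PairwiseDisjoint id
  let U : Finset (Finset α) → Finset α := fun S => S.biUnion id
  -- The members of the packing that meet `h` lie in `A` and cover `A ∩ h`.
  have hcover : ∀ A ∈ E.powerset.filter fun A => Disjoint (alter 𝒞 A) h,
      ∃ S ∈ 𝒮, A ∈ E.powerset.filter fun A => U S ⊆ A ∧ Disjoint (h \ U S) A := by
    intro A hA
    obtain ⟨hAE, hA⟩ := Finset.mem_filter.1 hA
    obtain ⟨hS1, hS2, hS3, -⟩ := (exists_maximal_packing 𝒞 A).choose_spec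
    change packing 𝒞 A ⊆ 𝒞 at hS1
    change ∀ C ∈ packing 𝒞 A, C ⊆ A at hS2
    change (packing 𝒞 A : Set (Finset α)).PairwiseDisjoint id at hS3
    refine ⟨(packing 𝒞 A).filter (fun C => ¬ Disjoint C h), ?_, ?_⟩
    · refine Finset.mem_filter.2 ⟨Finset.mem_powerset.2 (Finset.filter_subset_filter _ hS1), ?_⟩
      exact hS3.subset (by exact_mod_cast Finset.filter_subset _ _)
    · refine Finset.mem_filter.2 ⟨hAE, ?_, ?_⟩
      · exact Finset.biUnion_subset.2 fun C hC => hS2 C (Finset.mem_filter.1 hC).1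
      · rw [Finset.disjoint_left]
        intro e he heA
        obtain ⟨heh, heU⟩ := Finset.mem_sdiff.1 he
        have h1 : e ∉ alter 𝒞 A := fun h' => Finset.disjoint_left.1 hA h' heh
        have h2 : e ∈ (packing 𝒞 A).biUnion id := by
          by_contra h2
          exact h1 (Finset.mem_sdiff.2 ⟨heA, h2⟩)
        obtain ⟨C, hC, heC⟩ := Finset.mem_biUnion.1 h2
        exact heU (Finset.mem_biUnion.2 ⟨C, Finset.mem_filter.2
          ⟨hC, Finset.not_disjoint_iff.2 ⟨e, heC, heh⟩⟩, heC⟩)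
  have hterm : ∀ S ∈ 𝒮, ∑ A ∈ E.powerset with U S ⊆ A ∧ Disjoint (h \ U S) A, weight E p A
      ≤ (1 - p) ^ h.card * c ^ S.card := by
    intro S hS
    obtain ⟨hS1, hS2⟩ := Finset.mem_filter.1 hS
    have hS3 : ∀ C ∈ S, C ⊆ E ∧ C.card = k := fun C hC =>
      h𝒞 C (Finset.mem_filter.1 (Finset.mem_powerset.1 hS1 hC)).1
    have hUc : (U S).card = k * S.card := by
      change (S.biUnion id).card = _
      rw [Finset.card_biUnion hS2, mul_comm]
      exact Finset.sum_const_nat fun C hC => (hS3 C hC).2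
    refine (sum_weight_filter_le E (U := U S) (T := h \ U S) hp.le (by linarith)
      (Finset.biUnion_subset.2 fun C hC => (hS3 C hC).1)
      (Finset.sdiff_subset.trans hh) Finset.disjoint_sdiff).trans ?_
    have h1 : h.card ≤ (h \ U S).card + (U S).card := by
      have := Finset.le_card_sdiff (U S) h
      omega
    have h2 : p ^ (U S).card = c ^ S.card * (1 - p) ^ (U S).card := by
      rw [hc, ← pow_mul, ← hUc, ← mul_pow, div_mul_cancel₀ _ hq.ne']
    rw [h2, mul_assoc, ← pow_add, mul_comm]
    refine mul_le_mul_of_nonneg_right ?_ (by positivity)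
    exact pow_le_pow_of_le_one hq.le (by linarith) (by omega)
  calc ∑ A ∈ E.powerset with Disjoint (alter 𝒞 A) h, weight E p A
      ≤ ∑ S ∈ 𝒮, ∑ A ∈ E.powerset with U S ⊆ A ∧ Disjoint (h \ U S) A, weight E p A :=
        sum_le_sum_of_cover hcover fun A => weight_nonneg E hp.le (by linarith) A
    _ ≤ ∑ S ∈ 𝒮, (1 - p) ^ h.card * c ^ S.card := Finset.sum_le_sum hterm
    _ ≤ ∑ S ∈ 𝒞h.powerset, (1 - p) ^ h.card * c ^ S.card :=
        Finset.sum_le_sum_of_subset_of_nonneg (Finset.filter_subset _ _)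
          fun S _ _ => by positivity
    _ = (1 - p) ^ h.card * (1 + c) ^ 𝒞h.card := by
        rw [← Finset.mul_sum, add_comm, ← Finset.sum_pow_mul_eq_add_pow]
        simp
    _ ≤ Real.exp (-p) ^ h.card * Real.exp c ^ 𝒞h.card := by
        gcongr
        · have := Real.add_one_le_exp (-p); linarith
        · have := Real.add_one_le_exp c; linarith
    _ = Real.exp (-(h.card * p) + 𝒞h.card * c) := by
        rw [← Real.exp_nat_mul, ← Real.exp_nat_mul, ← Real.exp_add]
        ring_nf
    _ ≤ Real.exp (-(1 / 2 * (h.card : ℝ) * p)) := by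
        rw [Real.exp_le_exp]
        have h1 : (𝒞h.card : ℝ) * c ≤ 𝒞h.card * (2 * p) ^ k := by gcongr
        have h2 : (𝒞h.card : ℝ) * (2 * p) ^ k ≤ h.card * D * (2 * p) ^ k := by gcongr
        have h3 : (h.card : ℝ) * (D * (2 * p) ^ k) ≤ h.card * (p / 2) := by gcongr
        nlinarith

end Abstract

/-! ### Copies of a graph -/

section Copies

variable {W : Type*} [Fintype W]

/-- The edge sets of all (not necessarily induced) copies of `K` in the complete graph on `Fin n`. -/
noncomputable def copies (K : SimpleGraph W) (n : ℕ) : Finset (Finset (Sym2 (Fin n))) :=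
  (univ : Finset (W ↪ Fin n)).image fun g : W ↪ Fin n => K.edgeFinset.image (Sym2.map g)

lemma mem_copies (K : SimpleGraph W) {n : ℕ} {C : Finset (Sym2 (Fin n))} (hC : C ∈ copies K n) :
    C ⊆ (⊤ : SimpleGraph (Fin n)).edgeFinset ∧ C.card = K.edgeFinset.card := by
  obtain ⟨g, -, rfl⟩ := Finset.mem_image.1 hC
  refine ⟨?_, Finset.card_image_of_injective _ (Sym2.map.injective g.injective)⟩
  intro e he
  obtain ⟨d, hd, rfl⟩ := Finset.mem_image.1 he
  induction d with
  | h a b =>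
    have : K.Adj a b := by simpa using hd
    simpa using fun h => this.ne (g.injective h)

lemma card_fun_two_values_le {n : ℕ} {a b : W} (hab : a ≠ b) (x y : Fin n) :
    (univ.filter fun g : W ↪ Fin n => g a = x ∧ g b = y).card ≤ n ^ (Fintype.card W - 2) := by
  have h1 : Fintype.card {c : W // c ∉ ({a, b} : Finset W)} = Fintype.card W - 2 := by
    rw [Fintype.card_subtype_compl, Fintype.card_coe, Finset.card_pair hab]
  calc _ ≤ (univ : Finset ({c : W // c ∉ ({a, b} : Finset W)} → Fin n)).card := by
        refine Finset.card_le_card_of_injOn (fun g c => g c.1) (by simp) ?_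
        intro g hg g' hg' h
        simp only [Finset.coe_filter, Finset.mem_univ, true_and, Set.mem_ofPred_eq] at hg hg'
        ext c
        by_cases hca : c = a
        · rw [hca, hg.1, hg'.1]
        by_cases hcb : c = b
        · rw [hcb, hg.2, hg'.2]
        have := congrFun h ⟨c, by simp [hca, hcb]⟩
        simpa using congrArg Fin.val this
    _ = _ := by
        rw [Finset.card_univ, Fintype.card_fun, Fintype.card_fin, h1]

/-- Two endpoints of an edge of `K` go to the endpoints of `e`; the other vertices are free. -/
lemma card_copies_through_le (K : SimpleGraph W) (n : ℕ) (e : Sym2 (Fin n)) :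
    ((copies K n).filter fun C => e ∈ C).card
      ≤ Fintype.card W ^ 2 * n ^ (Fintype.card W - 2) := by
  induction e with
  | h x y =>
  let P : Finset (W × W) := univ.filter fun q => q.1 ≠ q.2
  have hsub : ((copies K n).filter fun C => s(x, y) ∈ C) ⊆
      P.biUnion fun q => (univ.filter fun g : W ↪ Fin n => g q.1 = x ∧ g q.2 = y).image
        fun g : W ↪ Fin n => K.edgeFinset.image (Sym2.map g) := by
    intro C hC
    obtain ⟨hC, he⟩ := Finset.mem_filter.1 hC
    obtain ⟨g, -, rfl⟩ := Finset.mem_image.1 hC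
    obtain ⟨d, hd, hde⟩ := Finset.mem_image.1 he
    induction d with
    | h a b =>
      have hab : K.Adj a b := by simpa using hd
      rw [Sym2.map_mk, Sym2.eq_iff] at hde
      rcases hde with hde | hde
      · exact Finset.mem_biUnion.2 ⟨(a, b), by simpa [P] using hab.ne,
          Finset.mem_image.2 ⟨g, by simpa using hde, rfl⟩⟩
      · exact Finset.mem_biUnion.2 ⟨(b, a), by simpa [P] using hab.ne',
          Finset.mem_image.2 ⟨g, by simpa using hde.symm, rfl⟩⟩
  calc _ ≤ P.card * n ^ (Fintype.card W - 2) :=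
        (Finset.card_le_card hsub).trans <| Finset.card_biUnion_le_card_mul _ _ _ fun q hq =>
          Finset.card_image_le.trans (card_fun_two_values_le (Finset.mem_filter.1 hq).2 x y)
    _ ≤ _ := by
        gcongr
        refine (Finset.card_le_univ _).trans ?_
        simp [sq]

end Copies

/-! ### The subgraph attaining the 2-density -/

section Density

variable {V : Type*} [Fintype V]

lemma exists_subgraph_m2Dens (F : SimpleGraph V) (hF : ∃ v, 2 ≤ F.degree v) :
    ∃ J : F.Subgraph, 3 ≤ J.verts.ncard ∧ 2 ≤ J.edgeSet.ncard ∧ 0 < m2Dens F ∧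
      ((J.edgeSet.ncard : ℝ) - 1) = m2Dens F * ((J.verts.ncard : ℝ) - 2) := by
  set X : Set ℝ := {x : ℝ | ∃ J : F.Subgraph, 3 ≤ J.verts.ncard ∧
    x = ((J.edgeSet.ncard : ℝ) - 1) / ((J.verts.ncard : ℝ) - 2)} with hX
  have hfin : X.Finite := by
    refine (Set.finite_range fun J : F.Subgraph =>
      ((J.edgeSet.ncard : ℝ) - 1) / ((J.verts.ncard : ℝ) - 2)).subset ?_
    rintro x ⟨J, -, rfl⟩
    exact ⟨J, rfl⟩
  -- The path with two edges has 2-density one.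
  have hone : (1 : ℝ) ∈ X := by
    obtain ⟨v, hv⟩ := hF
    obtain ⟨a, ha, b, hb, hab⟩ := Finset.one_lt_card.1 (show 1 < (F.neighborFinset v).card from hv)
    rw [SimpleGraph.mem_neighborFinset] at ha hb
    refine ⟨F.subgraphOfAdj ha ⊔ F.subgraphOfAdj hb, ?_, ?_⟩
    all_goals
      have hverts : (F.subgraphOfAdj ha ⊔ F.subgraphOfAdj hb).verts.ncard = 3 := by
        have : (F.subgraphOfAdj ha ⊔ F.subgraphOfAdj hb).verts = {v, a, b} := by
          ext c; simp; tauto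
        rw [this, Set.ncard_eq_three]
        exact ⟨v, a, b, ha.ne, hb.ne, hab, rfl⟩
    · omega
    · have hedges : (F.subgraphOfAdj ha ⊔ F.subgraphOfAdj hb).edgeSet.ncard = 2 := by
        rw [SimpleGraph.Subgraph.edgeSet_sup, SimpleGraph.edgeSet_subgraphOfAdj,
          SimpleGraph.edgeSet_subgraphOfAdj, Set.singleton_union, Set.ncard_pair]
        simp [hab, hb.ne]
      rw [hverts, hedges]; norm_num
  obtain ⟨J, hJ3, hJ⟩ : m2Dens F ∈ X := Set.Nonempty.csSup_mem ⟨1, hone⟩ hfin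
  have h1 : 1 ≤ m2Dens F := le_csSup hfin.bddAbove hone
  have hv : (3 : ℝ) ≤ J.verts.ncard := by exact_mod_cast hJ3
  have heq : ((J.edgeSet.ncard : ℝ) - 1) = m2Dens F * ((J.verts.ncard : ℝ) - 2) := by
    rw [hJ, div_mul_cancel₀]; linarith
  refine ⟨J, hJ3, ?_, by linarith, heq⟩
  have : (2 : ℝ) ≤ J.edgeSet.ncard := by nlinarith
  exact_mod_cast this

lemma card_edgeFinset_coe {U : Type*} {F : SimpleGraph U} (J : F.Subgraph) [Fintype J.coe.edgeSet] :
    J.coe.edgeFinset.card = J.edgeSet.ncard := by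
  rw [← SimpleGraph.Subgraph.image_coe_edgeSet_coe J,
    Set.ncard_image_of_injective _ (Sym2.map.injective Subtype.val_injective),
    ← SimpleGraph.coe_edgeFinset, Set.ncard_coe_finset]

/-- A copy of `F` in the altered graph would yield a copy of `J` disjoint from the packing,
contradicting maximality. -/
lemma fFree_alter {F : SimpleGraph V} (J : F.Subgraph) (hJ : 2 ≤ J.edgeSet.ncard) {n : ℕ}
    (A : Finset (Sym2 (Fin n))) :
    FFree F (SimpleGraph.fromEdgeSet (alter (copies J.coe n) A : Set (Sym2 (Fin n)))) := by
  rintro ⟨f, hf⟩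
  obtain ⟨-, -, -, hmax⟩ := (exists_maximal_packing (copies J.coe n) A).choose_spec
  let g : J.verts ↪ Fin n := (Function.Embedding.subtype _).trans f
  have hC : J.coe.edgeFinset.image (Sym2.map g) ∈ copies J.coe n :=
    Finset.mem_image.2 ⟨g, Finset.mem_univ _, rfl⟩
  refine hmax _ hC ?_ ?_
  · rw [← Finset.card_pos, (mem_copies _ hC).2, card_edgeFinset_coe]
    omega
  · intro e he
    obtain ⟨d, hd, rfl⟩ := Finset.mem_image.1 he
    induction d with
    | h a b =>
      have hab : J.Adj a b := by simpa using hd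
      have := (SimpleGraph.fromEdgeSet_adj _).1 (hf a b hab.adj_sub)
      exact this.1

/-- By `(k - 1) / (v - 2) = m` the powers of `n` cancel: up to a constant, the left side is the
expected number of copies, with `v` vertices and `k` edges, through a given edge that is present. -/
lemma density_bound {n : ℕ} (hn : 1 ≤ n) {v k : ℕ} (hv : 3 ≤ v) (hk : 2 ≤ k) {m ε p : ℝ}
    (hm : 0 < m) (hkm : (k : ℝ) - 1 = m * ((v : ℝ) - 2)) (hε : 0 < ε) (hε1 : ε ≤ 1) (hp : 0 < p)
    (hpn : p ≤ ε * (n : ℝ) ^ (-1 / m)) :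
    (n : ℝ) ^ (v - 2) * p ^ (k - 1) ≤ ε := by
  have hn0 : (0 : ℝ) < n := by exact_mod_cast hn
  have h1 : ((n : ℝ) ^ (-1 / m)) ^ (k - 1) = ((n : ℝ) ^ (v - 2))⁻¹ := by
    rw [← Real.rpow_natCast, ← Real.rpow_mul hn0.le, ← Real.rpow_natCast, ← Real.rpow_neg hn0.le]
    congr 1
    rw [Nat.cast_sub (by omega), Nat.cast_sub (by omega)]
    push_cast
    rw [hkm]; field_simp
  calc (n : ℝ) ^ (v - 2) * p ^ (k - 1)
      ≤ (n : ℝ) ^ (v - 2) * (ε * (n : ℝ) ^ (-1 / m)) ^ (k - 1) := by gcongr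
    _ = ε ^ (k - 1) := by rw [mul_pow, h1]; field_simp
    _ ≤ ε := pow_le_of_le_one hε.le hε1 (by omega)

end Density

theorem main_technical_lemma_fractional {V : Type*} [Fintype V] (F : SimpleGraph V)
    (hF : ∃ v, 2 ≤ F.degree v) :
    ∃ ε ∈ Set.Ioc (0 : ℝ) (1 / 2), ∃ δ ∈ Set.Ioc (0 : ℝ) (1 / 2),
      ∀ n : ℕ, 1 ≤ n → ∀ p : ℝ, 0 < p → p ≤ ε * (n : ℝ) ^ (-1 / m2Dens F) →
        ∀ 𝓗 : Finset (SimpleGraph (Fin n)), ∀ lam : SimpleGraph (Fin n) → ℝ,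
          (∀ H ∈ 𝓗, 0 ≤ lam H) →
          (∑ H ∈ 𝓗, lam H * Real.exp (-(δ * (H.edgeFinset.card : ℝ) * p))) ≤ 1 / 2 →
          ∃ G : SimpleGraph (Fin n), FFree F G ∧
            (∑ H ∈ 𝓗.filter (fun H => G.edgeFinset ∩ H.edgeFinset = ∅), lam H) < 1 := by
  obtain ⟨J, hv, hk, hm, hkm⟩ := exists_subgraph_m2Dens F hF
  set v := J.verts.ncard with hvdef
  set k := J.edgeSet.ncard with hkdef
  have hcardv : Fintype.card J.verts = v := by
    rw [hvdef, ← Nat.card_coe_set_eq, Nat.card_eq_fintype_card]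
  have hv0 : (3 : ℝ) ≤ v := by exact_mod_cast hv
  -- With this `ε`, the bound `v² n^(v-2)` on the copies through an edge times `(2p)^k` is at most
  -- `v² 2^k ε p = p / 2`.
  set ε : ℝ := 1 / (v ^ 2 * 2 ^ (k + 1)) with hεdef
  have hε : 0 < ε := by positivity
  have hε1 : ε ≤ 1 / 2 := by
    have h2 : (1 : ℝ) ≤ 2 ^ k := one_le_pow₀ (by norm_num)
    rw [hεdef]
    apply one_div_le_one_div_of_le (by norm_num)
    rw [pow_succ 2 k]
    nlinarith [mul_le_mul (show (1 : ℝ) ≤ v ^ 2 by nlinarith) h2 zero_le_one (by positivity)]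
  refine ⟨ε, ⟨hε, hε1⟩, 1 / 2, ⟨by norm_num, le_rfl⟩, ?_⟩
  intro n hn p hp hpn 𝓗 lam hlam hsum
  have hn1 : (1 : ℝ) ≤ n := by exact_mod_cast hn
  have hp1 : p ≤ 1 / 2 := by
    have : (n : ℝ) ^ (-1 / m2Dens F) ≤ 1 :=
      Real.rpow_le_one_of_one_le_of_nonpos hn1 (by rw [neg_div]; simp [hm.le])
    nlinarith
  set E := (⊤ : SimpleGraph (Fin n)).edgeFinset with hE
  set 𝒞 := copies J.coe n with h𝒞
  have hDp : ((v : ℝ) ^ 2 * (n : ℝ) ^ (v - 2)) * (2 * p) ^ k ≤ p / 2 := by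
    have h1 := density_bound hn hv hk hm hkm hε (by linarith) hp hpn
    have h2 : p ^ k = p ^ (k - 1) * p := by rw [← pow_succ]; congr 1; omega
    calc ((v : ℝ) ^ 2 * (n : ℝ) ^ (v - 2)) * (2 * p) ^ k
        = (v : ℝ) ^ 2 * 2 ^ k * p * ((n : ℝ) ^ (v - 2) * p ^ (k - 1)) := by
          rw [mul_pow, h2]; ring
      _ ≤ (v : ℝ) ^ 2 * 2 ^ k * p * ε := by gcongr
      _ = p / 2 := by rw [hεdef, pow_succ 2 k]; field_simp
  obtain ⟨G, hGA⟩ : ∃ G : Finset (Sym2 (Fin n)) → SimpleGraph (Fin n),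
      ∀ A, G A = SimpleGraph.fromEdgeSet (alter 𝒞 A : Set (Sym2 (Fin n))) := ⟨_, fun _ => rfl⟩
  have hG : ∀ A ∈ E.powerset, (G A).edgeFinset = alter 𝒞 A := by
    intro A hA
    ext e
    have hd : e ∈ alter 𝒞 A → ¬ e.IsDiag := fun he => by
      have : e ∈ E := Finset.mem_powerset.1 hA (alter_subset _ _ he)
      exact SimpleGraph.not_isDiag_of_mem_edgeFinset this
    rw [SimpleGraph.mem_edgeFinset, hGA, SimpleGraph.edgeSet_fromEdgeSet, Set.mem_sdiff]
    exact ⟨fun he => he.1, fun he => ⟨he, hd he⟩⟩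
  have hprob : ∀ H : SimpleGraph (Fin n),
      ∑ A ∈ E.powerset with (G A).edgeFinset ∩ H.edgeFinset = ∅, weight E p A
        ≤ Real.exp (-(1 / 2 * (H.edgeFinset.card : ℝ) * p)) := by
    intro H
    have hfilter : (E.powerset.filter fun A => (G A).edgeFinset ∩ H.edgeFinset = ∅) =
        E.powerset.filter fun A => Disjoint (alter 𝒞 A) H.edgeFinset :=
      Finset.filter_congr fun A hA => by rw [hG A hA, Finset.disjoint_iff_inter_eq_empty]
    rw [hfilter]
    have h1 : ∀ C ∈ 𝒞, C ⊆ E ∧ C.card = k := by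
      intro C hC
      rw [hkdef, ← card_edgeFinset_coe]
      exact mem_copies _ hC
    have h2 : H.edgeFinset ⊆ E := SimpleGraph.edgeFinset_mono le_top
    have h3 : ∀ e ∈ H.edgeFinset, ((𝒞.filter fun C => e ∈ C).card : ℝ) ≤
        (v : ℝ) ^ 2 * (n : ℝ) ^ (v - 2) := by
      intro e _
      have := card_copies_through_le J.coe n e
      rw [hcardv] at this
      exact_mod_cast this
    exact sum_weight_alter_le E 𝒞 h1 h2 hp hp1 h3 hDp
  -- Otherwise the expectation of the sum in question would be at least one.
  by_contra! hcon
  have hlow : (1 : ℝ) ≤ ∑ A ∈ E.powerset, weight E p A *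
      ∑ H ∈ 𝓗 with (G A).edgeFinset ∩ H.edgeFinset = ∅, lam H := by
    rw [← sum_weight E p]
    refine Finset.sum_le_sum fun A _ => le_mul_of_one_le_right
      (weight_nonneg E hp.le (by linarith) A) (hcon (G A) (hGA A ▸ fFree_alter J hk A))
  have hswap : ∑ A ∈ E.powerset, weight E p A *
      ∑ H ∈ 𝓗 with (G A).edgeFinset ∩ H.edgeFinset = ∅, lam H =
      ∑ H ∈ 𝓗, lam H *
        ∑ A ∈ E.powerset with (G A).edgeFinset ∩ H.edgeFinset = ∅, weight E p A := by
    simp only [Finset.mul_sum, Finset.sum_filter]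
    rw [Finset.sum_comm]
    refine Finset.sum_congr rfl fun H _ => Finset.sum_congr rfl fun A _ => ?_
    split_ifs <;> ring
  have hup : ∑ H ∈ 𝓗, lam H *
        ∑ A ∈ E.powerset with (G A).edgeFinset ∩ H.edgeFinset = ∅, weight E p A ≤ 1 / 2 :=
    (Finset.sum_le_sum fun H hH => mul_le_mul_of_nonneg_left (hprob H) (hlam H hH)).trans hsum
  linarith
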